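/- Let 0 ≤ q ≤ 1, η > 0, θ ≥ 0, τ ≥ 0 and fix s > 0 and x ∈ ℝ. Then for every k ≥ 1, Σ_{j=0}^{k} [k choose j]_q q^{(k−j)(k−j−1)/2} p_{k−j}(x;s) = Π_{j=0}^{k−1} A_j(x,s)/a_j. -/

import Mathlib

/-- `[n]_q = 1 + q + ⋯ + q^{n-1}`. -/
noncomputable def qnum (q : ℝ) (n : ℕ) : ℝ := ∑ i ∈ Finset.range n, q ^ i

/-- `[n]_q! = [1]_q [2]_q ⋯ [n]_q`. -/
noncomputable def qfact (q : ℝ) (n : ℕ) : ℝ := ∏ i ∈ Finset.range n, qnum q (i + 1)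

/-- q-binomial coefficient `[n choose k]_q`, with the convention that it is `0` for `k > n`. -/
noncomputable def qbinom (q : ℝ) (n k : ℕ) : ℝ :=
  if k ≤ n then qfact q n / (qfact q (n - k) * qfact q k) else 0

/-- `a_n = η⁻¹ + θ[n]_q + [n]_q² ητ`. -/
noncomputable def aCoef (η θ τ q : ℝ) (n : ℕ) : ℝ :=
  η⁻¹ + θ * qnum q n + (qnum q n) ^ 2 * η * τ

/-- `b_n(t) = (tη + θ + ([n]_q + [n-1]_q)ητ)[n]_q`. -/
noncomputable def bCoef (η θ τ q t : ℝ) (n : ℕ) : ℝ :=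
  (t * η + θ + (qnum q n + qnum q (n - 1)) * η * τ) * qnum q n

/-- `c_n(t) = η(t + τ[n-1]_q)[n]_q`. -/
noncomputable def cCoef (η τ q t : ℝ) (n : ℕ) : ℝ :=
  η * (t + τ * qnum q (n - 1)) * qnum q n

/-- `A_n(x,s) = a_n + q^n x - sη q^n [n]_q`. -/
noncomputable def ACoef (η θ τ q x s : ℝ) (n : ℕ) : ℝ :=
  aCoef η θ τ q n + q ^ n * x - s * η * q ^ n * qnum q n

/-- `x_k(s) = ((sη q^k - θ)[k]_q - η⁻¹ - ητ[k]_q²)/q^k`, the zero of `x ↦ A_k(x,s)`. -/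
noncomputable def xPt (η θ τ q s : ℝ) (k : ℕ) : ℝ :=
  ((s * η * q ^ k - θ) * qnum q k - η⁻¹ - η * τ * (qnum q k) ^ 2) / q ^ k

lemma qnum_succ' (q : ℝ) (n : ℕ) : qnum q (n + 1) = qnum q n + q ^ n := by
  simp [qnum, Finset.sum_range_succ]

lemma qnum_zero' (q : ℝ) : qnum q 0 = 0 := by simp [qnum]

lemma qnum_nonneg' {q : ℝ} (hq : 0 ≤ q) (n : ℕ) : 0 ≤ qnum q n :=
  Finset.sum_nonneg fun _ _ => pow_nonneg hq _

lemma qnum_pos' {q : ℝ} (hq : 0 ≤ q) (n : ℕ) : 0 < qnum q (n + 1) := by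
  induction n with
  | zero => simp [qnum]
  | succ n ih =>
    rw [qnum_succ']
    have := pow_nonneg hq (n + 1)
    linarith

lemma qnum_add' (q : ℝ) (m d : ℕ) : qnum q (m + d) = qnum q m + q ^ m * qnum q d := by
  induction d with
  | zero => simp [qnum_zero']
  | succ d ih => rw [← add_assoc, qnum_succ', ih, qnum_succ']; ring

lemma qfact_succ' (q : ℝ) (n : ℕ) : qfact q (n + 1) = qfact q n * qnum q (n + 1) := by
  simp [qfact, Finset.prod_range_succ]

lemma qfact_pos' {q : ℝ} (hq : 0 ≤ q) (n : ℕ) : 0 < qfact q n :=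
  Finset.prod_pos fun _ _ => qnum_pos' hq _

lemma qbinom_add' (q : ℝ) (m d : ℕ) :
    qbinom q (m + d) m = qfact q (m + d) / (qfact q d * qfact q m) := by
  simp [qbinom]

lemma qbinom_step {q : ℝ} (hq : 0 ≤ q) (m d : ℕ) :
    qbinom q (m + d) (m + 1) * qnum q (m + 1) = qbinom q (m + d) m * qnum q d := by
  cases d with
  | zero => simp [qbinom, qnum_zero']
  | succ d =>
    have e : m + (d + 1) = (m + 1) + d := by ring
    rw [qbinom_add' q m (d + 1), e, qbinom_add' q (m + 1) d, qfact_succ' q m, qfact_succ' q d]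
    have h1 := (qfact_pos' hq m).ne'
    have h2 := (qfact_pos' hq d).ne'
    have h3 := (qnum_pos' hq m).ne'
    have h4 := (qnum_pos' hq d).ne'
    field_simp

lemma qbinom_succ_succ {q : ℝ} (hq : 0 ≤ q) (m d : ℕ) :
    qbinom q (m + d + 1) (m + 1) = qbinom q (m + d) (m + 1) + q ^ d * qbinom q (m + d) m := by
  have h3 := (qnum_pos' hq m).ne'
  have hs := qbinom_step hq m d
  have h : qbinom q (m + d + 1) (m + 1) * qnum q (m + 1)
      = qbinom q (m + d) m * qnum q (m + d + 1) := by
    have e : m + d + 1 = (m + 1) + d := by ring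
    have h0 : qbinom q (m + d + 1) (m + 1)
        = qfact q (m + d + 1) / (qfact q d * qfact q (m + 1)) := by
      rw [e, qbinom_add' q (m + 1) d]
    rw [h0, qbinom_add', qfact_succ' q m, qfact_succ' q (m + d)]
    have h1 := (qfact_pos' hq m).ne'
    have h2 := (qfact_pos' hq d).ne'
    field_simp
  have e2 : qnum q (m + d + 1) = qnum q d + q ^ d * qnum q (m + 1) := by
    rw [← qnum_add']; congr 1; ring
  apply mul_right_cancel₀ h3
  rw [h, e2, add_mul, hs]; ring

lemma qbinom_zero' {q : ℝ} (hq : 0 ≤ q) (n : ℕ) : qbinom q n 0 = 1 := by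
  have := (qfact_pos' hq n).ne'
  have h0 : qfact q 0 = 1 := by simp [qfact]
  simp [qbinom, h0, this]

/-- the weights -/
noncomputable def wt (q : ℝ) (k m : ℕ) : ℝ := qbinom q k m * q ^ (m.choose 2)

lemma wt_top (q : ℝ) (k : ℕ) : wt q k (k + 1) = 0 := by simp [wt, qbinom]

lemma choose_two_succ (m : ℕ) : (m + 1).choose 2 = m + m.choose 2 := by
  rw [Nat.choose_succ_succ' m 1]; simp

lemma wt_step {q : ℝ} (hq : 0 ≤ q) {k m : ℕ} (h : m ≤ k) :
    qnum q (m + 1) * wt q k (m + 1) = (qnum q k - qnum q m) * wt q k m := by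
  obtain ⟨d, rfl⟩ := Nat.exists_eq_add_of_le h
  have := qbinom_step hq m d
  rw [qnum_add' q m d, wt, wt, choose_two_succ, pow_add]
  linear_combination (q ^ m * q ^ (m.choose 2)) * this

lemma wt_pascal {q : ℝ} (hq : 0 ≤ q) {k m : ℕ} (h : m ≤ k) :
    wt q (k + 1) (m + 1) = wt q k (m + 1) + q ^ k * wt q k m := by
  obtain ⟨d, rfl⟩ := Nat.exists_eq_add_of_le h
  simp only [wt]
  rw [qbinom_succ_succ hq, choose_two_succ, pow_add, pow_add]
  ring

lemma sum_step {q : ℝ} (hq : 0 ≤ q) (k : ℕ) (f : ℕ → ℝ) :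
    ∑ m ∈ Finset.range (k + 1 + 1), wt q (k + 1) m * f m
      = ∑ m ∈ Finset.range (k + 1), wt q k m * f m
        + q ^ k * ∑ m ∈ Finset.range (k + 1), wt q k m * f (m + 1) := by
  have h0 : ∑ m ∈ Finset.range (k + 1), wt q k m * f m
      = ∑ m ∈ Finset.range (k + 1 + 1), wt q k m * f m := by
    rw [Finset.sum_range_succ _ (k + 1), wt_top]; simp
  rw [h0, Finset.sum_range_succ' _ (k + 1), Finset.sum_range_succ' _ (k + 1), Finset.mul_sum]
  have h1 : wt q (k + 1) 0 = wt q k 0 := by simp [wt, qbinom_zero' hq]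
  rw [h1, add_right_comm, ← Finset.sum_add_distrib]
  congr 1
  apply Finset.sum_congr rfl
  intro m hm
  rw [wt_pascal hq (by simpa [Nat.lt_succ_iff] using hm)]
  ring

lemma key_sum (η θ τ q s x : ℝ) (hq0 : 0 ≤ q) (f : ℕ → ℝ)
    (hf : ∀ n : ℕ, x * f n = aCoef η θ τ q n * f (n + 1) + bCoef η θ τ q s n * f n
        + cCoef η τ q s n * f (n - 1)) (k : ℕ) :
    aCoef η θ τ q k * ∑ m ∈ Finset.range (k + 1), wt q k m * f (m + 1)
      = (x - s * η * qnum q k) * ∑ m ∈ Finset.range (k + 1), wt q k m * f m := by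
  let F : ℕ → ℝ := fun m => qnum q m * wt q k m *
    ((θ + η * τ * (qnum q k + qnum q (m - 1))) * f m + η * (s + τ * qnum q (m - 1)) * f (m - 1))
  have hF := Finset.sum_range_sub F (k + 1)
  have hz : F (k + 1) - F 0 = 0 := by simp [F, wt_top, qnum_zero']
  rw [hz] at hF
  rw [← sub_eq_zero, ← hF, Finset.mul_sum, Finset.mul_sum, ← Finset.sum_sub_distrib]
  apply Finset.sum_congr rfl
  intro m hm
  have hw := wt_step hq0 (k := k) (m := m) (by simpa [Nat.lt_succ_iff] using hm)
  have h := hf m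
  simp only [F, Nat.add_sub_cancel]
  rw [hw]
  simp only [aCoef, bCoef, cCoef] at h ⊢
  linear_combination (-wt q k m) * h

/-- for `0 ≤ q ≤ 1`, `η > 0`, `θ ≥ 0`, `τ ≥ 0`, `s > 0` and `x ∈ ℝ`, for every
`k ≥ 1`, `∑_{j=0}^k [k choose j]_q q^{(k-j)(k-j-1)/2} p_{k-j}(x;s) = ∏_{j=0}^{k-1} A_j(x,s)/a_j`.
Here `p n y` denotes `p_n(y;s)`, given by its defining three-term recurrence (the `n = 0` case
of the recurrence is the correct one since `b_0 = c_0 = 0`). -/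
theorem stmt1 (η θ τ q s x : ℝ)
    (hq0 : 0 ≤ q) (hq1 : q ≤ 1) (hη : 0 < η) (hθ : 0 ≤ θ) (hτ : 0 ≤ τ) (hs : 0 < s)
    (p : ℕ → ℝ → ℝ)
    (hp0 : ∀ y : ℝ, p 0 y = 1)
    (hprec : ∀ (n : ℕ) (y : ℝ), y * p n y =
      aCoef η θ τ q n * p (n + 1) y + bCoef η θ τ q s n * p n y
        + cCoef η τ q s n * p (n - 1) y) :
    ∀ k : ℕ, 1 ≤ k →
      ∑ j ∈ Finset.range (k + 1),
          qbinom q k j * q ^ ((k - j) * (k - j - 1) / 2) * p (k - j) x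
        = ∏ j ∈ Finset.range k, ACoef η θ τ q x s j / aCoef η θ τ q j := by
  have hapos : ∀ n, 0 < aCoef η θ τ q n := by
    intro n
    have := qnum_nonneg' hq0 n
    unfold aCoef
    positivity
  have main : ∀ k : ℕ, ∑ m ∈ Finset.range (k + 1), wt q k m * p m x
      = ∏ j ∈ Finset.range k, ACoef η θ τ q x s j / aCoef η θ τ q j := by
    intro k
    induction k with
    | zero => simp [wt, qbinom_zero' hq0, hp0]
    | succ k ih =>
      have hk := key_sum η θ τ q s x hq0 (fun n => p n x) (fun n => hprec n x) k
      have hst := sum_step hq0 k (fun n => p n x)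
      rw [Finset.prod_range_succ, ← ih, hst, mul_div_assoc', eq_div_iff (hapos k).ne']
      simp only [ACoef]
      linear_combination q ^ k * hk
  intro k _
  rw [← main k, ← Finset.sum_range_reflect]
  apply Finset.sum_congr rfl
  intro j hj
  have hj' : j ≤ k := by simpa [Nat.lt_succ_iff] using hj
  have e : k + 1 - 1 - j = k - j := by omega
  have e2 : k - (k - j) = j := by omega
  rw [e, e2, wt, Nat.choose_two_right]
  congr 2
  simp only [qbinom, hj', Nat.sub_le, if_true, e2]
  rw [mul_comm]
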